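/- Assume the integrality condition on (μ,ν). For every t with −1 < t < 1, one has ∫₀^∞ G^{μ,ν}(t,x) x^{μ+ν+1} dx = 2^{μ+ν} Γ((μ+ν+2)/2) (1+t)^{−(μ+ν+2)/2}, where G^{μ,ν}(t,x) = (1−t)^{−(μ+ν+2)/2} Ĩ_{μ/2}(tx/(1−t)) K̃_{ν/2}(x/(1−t)). -/

import Mathlib

open MeasureTheory Real Filter Set Metric

noncomputable section

/-- Normalized Bessel function of the first kind: `J̃_α(x) = (x/2)^{-α} J_α(x)`,
given by its (entire) power series. -/
def besselJt (α x : ℝ) : ℝ :=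
  ∑' m : ℕ, (-1) ^ m / (m.factorial * Real.Gamma (m + α + 1)) * (x / 2) ^ (2 * m)

/-- Bessel function of the first kind `J_α`. -/
def besselJ (α x : ℝ) : ℝ :=
  ∑' m : ℕ, (-1) ^ m / (m.factorial * Real.Gamma (m + α + 1)) * (x / 2) ^ (2 * (m : ℝ) + α)

/-- Normalized modified Bessel function `Ĩ_α(x) = (x/2)^{-α} I_α(x)`,
given by its (entire, even) power series. -/
def besselIt (α x : ℝ) : ℝ :=
  ∑' m : ℕ, (x / 2) ^ (2 * m) / (m.factorial * Real.Gamma (m + α + 1))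

/-- Modified Bessel function of the first kind `I_α`. -/
def besselI (α x : ℝ) : ℝ :=
  ∑' m : ℕ, (x / 2) ^ (2 * (m : ℝ) + α) / (m.factorial * Real.Gamma (m + α + 1))

/-- Modified Bessel function of the second kind,
`K_α(x) = lim_{β→α} (π/2)(I_{−β}(x) − I_β(x))/sin(βπ)`. -/
def besselK (α x : ℝ) : ℝ :=
  limUnder (nhdsWithin α {α}ᶜ) fun β =>
    Real.pi / 2 * (besselI (-β) x - besselI β x) / Real.sin (β * Real.pi)

/-- Normalized K-Bessel function `K̃_α(x) = (x/2)^{-α} K_α(x)`. -/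
def besselKt (α x : ℝ) : ℝ := (x / 2) ^ (-α) * besselK α x

/-- Normalized Gegenbauer polynomial `C̃_n^λ = Γ(λ) C_n^λ`, where `C_n^λ` is defined via the
generating function `(1 − 2xt + t²)^{−λ} = Σ_{n≥0} C_n^λ(x) tⁿ`; explicitly,
`C̃_n^λ(x) = Σ_{k=0}^{⌊n/2⌋} (−1)^k Γ(λ+n−k)/(k!(n−2k)!) (2x)^{n−2k}`.
This expression also gives the limit value `C̃_n^0 = lim_{λ→0+} Γ(λ) C_n^λ` for `n ≥ 1`. -/
def gegenbauerCt (n : ℕ) (l x : ℝ) : ℝ :=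
  ∑ k ∈ Finset.range (n / 2 + 1),
    (-1) ^ k * Real.Gamma (l + n - k) / (k.factorial * (n - 2 * k).factorial)
      * (2 * x) ^ (n - 2 * k)

/-- Laguerre polynomial `L_n^μ(x) = Σ_{k=0}^n (−1)^k binom(n+μ, n−k) x^k/k!`
(with nonnegative integer parameter `μ`). -/
def laguerreL (n μ : ℕ) (x : ℝ) : ℝ :=
  ∑ k ∈ Finset.range (n + 1),
    (-1) ^ k * (Nat.choose (n + μ) (n - k)) * x ^ k / k.factorial

/-- The Euler operator `θ = x d/dx`. -/
def eulerOp (u : ℝ → ℝ) : ℝ → ℝ := fun x => x * deriv u x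

/-- `(θ+c)(θ+c+ν)u − x² u`, i.e. the operator `Q_ν(θ+c)` applied to `u`. -/
def besselQ (ν c : ℝ) (u : ℝ → ℝ) : ℝ → ℝ := fun x =>
  eulerOp (fun y => eulerOp u y + (c + ν) * u y) x
    + c * (eulerOp u x + (c + ν) * u x) - x ^ 2 * u x

/-- The fourth order differential operator
`D_{μ,ν} = x^{−2}((θ+μ)(θ+μ+ν) − x²)(θ(θ+ν) − x²)`. -/
def Dop (μ ν : ℝ) (u : ℝ → ℝ) : ℝ → ℝ := fun x =>
  besselQ ν μ (besselQ ν 0 u) x / x ^ 2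

/-- The generating function
`G^{μ,ν}(t,x) = (1−t)^{−(μ+ν+2)/2} Ĩ_{μ/2}(tx/(1−t)) K̃_{ν/2}(x/(1−t))`. -/
def genFun (μ ν t x : ℝ) : ℝ :=
  (1 - t) ^ (-(μ + ν + 2) / 2) * besselIt (μ / 2) (t * x / (1 - t))
    * besselKt (ν / 2) (x / (1 - t))

/-- The eigenfunctions `Λ_j^{μ,ν}`, defined as the Taylor coefficients in `t` at `t = 0` of the
generating function `G^{μ,ν}(t,x) = Σ_{j≥0} Λ_j^{μ,ν}(x) t^j`. -/
def LambdaF (μ ν : ℝ) (j : ℕ) (x : ℝ) : ℝ :=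
  iteratedDeriv j (fun t => genFun μ ν t x) 0 / j.factorial

/-- The integrality condition: `μ ≥ ν ≥ −1` are integers of the same parity,
not both equal to `−1`. -/
def IntCond (μ ν : ℤ) : Prop :=
  -1 ≤ ν ∧ ν ≤ μ ∧ Even (μ - ν) ∧ ¬(μ = -1 ∧ ν = -1)

end

/-!
In the variable `z = (x / 2) ^ 2` the normalized functions `Ĩ_a` and `K̃_a` become the power series
`E_a(z) = ∑ zᵐ / (m! Γ(m + a + 1))` and half of `Γ(-a; z) = ∫₀^∞ exp(-u - z / u) u ^ (-a - 1) du`.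
The second identification is the connection formula for `K`: for orders in `(0, 1)` both sides
solve the Bessel–Clifford equation, and constancy of Wronskians reads off the coefficients from the
limits at `0`; differentiation and the symmetry `s ↦ -s` of the formula shift the order by integers,
and continuity in the order fills in the integer orders themselves.

By Fubini `∫₀^∞ z ^ (c - 1) Γ(s; z) dz = Γ(c) Γ(c + s)`. Replacing `c` by `c + m`, the factor
`Γ(c + m + s)` cancels the one in the `m`-th coefficient of `E_a(r z)` when `a = c + s - 1`, so that
integrating termwise leaves the binomial series `∑ Γ(c + m) rᵐ / m! = Γ(c) (1 - r) ^ (-c)`. The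
theorem is the case `r = t ^ 2`.
-/

noncomputable section

open scoped Nat Topology

/-- The Bessel–Clifford function `E_a(z) = ∑ zᵐ / (m! Γ(m + a + 1))`. It carries the
Bessel functions in the variable `z = (x / 2) ^ 2`: `I_a(x) = (x / 2) ^ a E_a(z)`. -/
def besselClifford (a z : ℝ) : ℝ := ∑' m : ℕ, z ^ m / (m ! * Gamma (m + a + 1))

/-- The Chaudhry–Zubair extended Gamma function `Γ(s; z) = ∫₀^∞ exp(-u - z / u) u ^ (s - 1) du`.
It carries the Bessel function of the second kind in the variable `z = (x / 2) ^ 2`: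
`K̃_a(x) = Γ(-a; z) / 2`. -/
def extendedGamma (s z : ℝ) : ℝ := ∫ u in Ioi 0, exp (-u - z / u) * u ^ (s - 1)

lemma self_div_Gamma_add_one (s : ℝ) : s / Gamma (s + 1) = 1 / Gamma s := by
  rcases eq_or_ne s 0 with rfl | hs
  · simp [Gamma_zero]
  · rw [Gamma_add_one hs, div_mul_cancel_left₀ hs, one_div]

lemma Gamma_add_nat_eq_ascPochhammer_mul {c : ℝ} (hc : ∀ n : ℕ, c ≠ -n) (m : ℕ) :
    Gamma (c + m) = (ascPochhammer ℝ m).eval c * Gamma c := by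
  induction m with
  | zero => simp
  | succ m ih =>
    have hcm : c + m ≠ 0 := fun h => hc m (by linarith)
    rw [Nat.cast_succ, ← add_assoc, Gamma_add_one hcm, ih, ascPochhammer_succ_eval]
    ring

lemma hasSum_Gamma_add_nat_div_factorial_mul_pow {c r : ℝ} (hc : ∀ n : ℕ, c ≠ -n) (hr : |r| < 1) :
    HasSum (fun m : ℕ => Gamma (c + m) / m ! * r ^ m) (Gamma c * (1 - r) ^ (-c)) := by
  have hmem : r ∈ Metric.eball (0 : ℝ) 1 := by
    simpa [Metric.mem_eball, edist_dist, ENNReal.ofReal_lt_one] using hr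
  have hbinom :=
    ((Real.one_div_one_sub_rpow_hasFPowerSeriesOnBall_zero c).hasSum hmem).mul_left (Gamma c)
  have hr1 : 0 ≤ 1 - r := by linarith [(abs_lt.1 hr).2]
  rw [zero_add, one_div, ← rpow_neg hr1] at hbinom
  refine hbinom.congr_fun fun m => ?_
  have hfact : (m ! : ℝ) * Ring.multichoose c m = (ascPochhammer ℝ m).eval c := by
    rw [← nsmul_eq_mul, Ring.factorial_nsmul_multichoose_eq_ascPochhammer,
      Polynomial.ascPochhammer_smeval_eq_eval]
  rw [FormalMultilinearSeries.ofScalars_apply_eq, ← Ring.multichoose_eq, smul_eq_mul,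
    Gamma_add_nat_eq_ascPochhammer_mul hc, ← hfact]
  field_simp

lemma summable_besselClifford (a z : ℝ) :
    Summable fun m : ℕ => z ^ m / (m ! * Gamma (m + a + 1)) := by
  refine .of_norm_bounded_eventually_nat (summable_pow_div_factorial |z|) ?_
  filter_upwards [eventually_ge_atTop ⌈1 - a⌉₊] with m hm
  have hma : 2 ≤ m + a + 1 := by linarith [Nat.ceil_le.1 hm]
  have hGamma : 1 ≤ Gamma (m + a + 1) :=
    Gamma_two.symm.le.trans <|
      Gamma_strictMonoOn_Ici.monotoneOn self_mem_Ici (mem_Ici.2 hma) hma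
  rw [norm_div, norm_mul, norm_pow, norm_eq_abs, RCLike.norm_natCast,
    norm_of_nonneg (zero_le_one.trans hGamma)]
  gcongr
  exact le_mul_of_one_le_right (by positivity) hGamma

lemma besselClifford_zero_right (a : ℝ) : besselClifford a 0 = (Gamma (a + 1))⁻¹ := by
  rw [besselClifford, tsum_eq_single 0 fun m hm => by simp [hm]]
  simp

lemma hasSum_deriv_besselClifford (a z : ℝ) :
    HasSum (fun m : ℕ => m * z ^ (m - 1) / (m ! * Gamma (m + a + 1)))
      (besselClifford (a + 1) z) := by
  rw [← hasSum_nat_add_iff' 1]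
  simp only [Finset.range_one, Finset.sum_singleton, CharP.cast_eq_zero, zero_mul, zero_div,
    sub_zero, add_tsub_cancel_right]
  refine (summable_besselClifford (a + 1) z).hasSum.congr_fun fun m => ?_
  have hm : (m : ℝ) + 1 ≠ 0 := by positivity
  rw [Nat.factorial_succ, Nat.cast_mul, Nat.cast_succ, mul_assoc, mul_div_mul_left _ _ hm]
  ring_nf

lemma hasDerivAt_besselClifford (a z : ℝ) :
    HasDerivAt (besselClifford a) (besselClifford (a + 1) z) z := by
  set R : ℝ := |z| + 1
  have hR : 0 < R := by positivity
  have hz : z ∈ ball (0 : ℝ) R := by simp [R]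
  rw [← (hasSum_deriv_besselClifford a z).tsum_eq]
  refine hasDerivAt_tsum_of_isPreconnected (hasSum_deriv_besselClifford a R).summable.norm
    isOpen_ball (convex_ball _ _).isPreconnected (fun m y _ => (hasDerivAt_pow m y).div_const _)
    (fun m y hy => ?_) hz (summable_besselClifford a z) hz
  have hy : |y| ≤ R := (mem_ball_zero_iff.1 hy).le
  simp only [norm_div, norm_mul, norm_pow, norm_eq_abs, abs_of_pos hR]
  gcongr

lemma tendsto_besselClifford_nhdsGT_zero (a : ℝ) :
    Tendsto (besselClifford a) (𝓝[>] 0) (𝓝 (Gamma (a + 1))⁻¹) := by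
  rw [← besselClifford_zero_right]
  exact (hasDerivAt_besselClifford a 0).continuousAt.tendsto.mono_left nhdsWithin_le_nhds

lemma besselClifford_sub_one (a z : ℝ) :
    besselClifford (a - 1) z = a * besselClifford a z + z * besselClifford (a + 1) z := by
  refine HasSum.unique ?_ (((summable_besselClifford a z).hasSum.mul_left a).add
    ((hasSum_deriv_besselClifford a z).mul_left z))
  refine (summable_besselClifford (a - 1) z).hasSum.congr_fun fun m => Eq.symm ?_
  have hpow : z * (m * z ^ (m - 1)) = m * z ^ m := by
    cases m with
    | zero => simp
    | succ m => rw [Nat.add_sub_cancel, pow_succ']; ring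
  calc z ^ m / (m ! * Gamma (m + (a - 1) + 1))
      = z ^ m / m ! * (1 / Gamma (m + a)) := by ring_nf
    _ = z ^ m / m ! * ((m + a) / Gamma (m + a + 1)) := by rw [self_div_Gamma_add_one]
    _ = (a * z ^ m + m * z ^ m) / (m ! * Gamma (m + a + 1)) := by ring
    _ = a * (z ^ m / (m ! * Gamma (m + a + 1)))
        + z * (m * z ^ (m - 1) / (m ! * Gamma (m + a + 1))) := by rw [← hpow]; ring

lemma hasDerivAt_rpow_mul_besselClifford (a : ℝ) {z : ℝ} (hz : 0 < z) :
    HasDerivAt (fun z => z ^ a * besselClifford a z)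
      (z ^ (a - 1) * besselClifford (a - 1) z) z := by
  refine ((hasDerivAt_rpow_const (p := a) (.inl hz.ne')).mul
    (hasDerivAt_besselClifford a z)).congr_deriv ?_
  rw [besselClifford_sub_one, rpow_sub_one hz.ne']
  field_simp

lemma extendedGamma_nonneg (s z : ℝ) : 0 ≤ extendedGamma s z :=
  setIntegral_nonneg measurableSet_Ioi fun u hu => by
    have hu : 0 < u := hu
    positivity

lemma extendedGamma_zero_right {s : ℝ} (hs : 0 < s) : extendedGamma s 0 = Gamma s := by
  simp [extendedGamma, Gamma_eq_integral hs]

lemma measurable_extendedGamma_integrand (s z : ℝ) :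
    Measurable fun u : ℝ => exp (-u - z / u) * u ^ (s - 1) := by
  fun_prop

/-- `exp (-z / u) ≤ k! (u / z) ^ k` for every `k`, which tames the singularity of
`u ^ (s - 1)` at `0` whatever the exponent. -/
lemma integrableOn_extendedGamma (s : ℝ) {z : ℝ} (hz : 0 < z) :
    IntegrableOn (fun u => exp (-u - z / u) * u ^ (s - 1)) (Ioi 0) := by
  obtain ⟨k, hk⟩ := exists_nat_gt (-s)
  have hbound := (GammaIntegral_convergent (s := s + k) (by linarith)).const_mul (k ! / z ^ k : ℝ)
  refine Integrable.mono' hbound (measurable_extendedGamma_integrand s z).aestronglyMeasurable <|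
    ae_restrict_of_forall_mem measurableSet_Ioi fun u (hu : 0 < u) => ?_
  have hexp : exp (-(z / u)) ≤ k ! / z ^ k * u ^ k := by
    rw [exp_neg]
    refine (inv_anti₀ (by positivity) (pow_div_factorial_le_exp (z / u) (by positivity) k)).trans_eq
      ?_
    rw [div_pow]
    field_simp
  rw [norm_of_nonneg (by positivity)]
  calc exp (-u - z / u) * u ^ (s - 1)
      = exp (-u) * exp (-(z / u)) * u ^ (s - 1) := by rw [sub_eq_add_neg, exp_add]
    _ ≤ exp (-u) * (k ! / z ^ k * u ^ k) * u ^ (s - 1) := by gcongr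
    _ = k ! / z ^ k * (exp (-u) * u ^ (s + k - 1)) := by
      rw [show s + k - 1 = (s - 1) + k by ring, rpow_add_natCast hu.ne']
      ring

lemma tendsto_extendedGamma_nhdsGT_zero {s : ℝ} (hs : 0 < s) :
    Tendsto (extendedGamma s) (𝓝[>] 0) (𝓝 (Gamma s)) := by
  rw [← extendedGamma_zero_right hs]
  refine continuousWithinAt_of_dominated (bound := fun u => exp (-u) * u ^ (s - 1))
    (.of_forall fun z => (measurable_extendedGamma_integrand s z).aestronglyMeasurable) ?_
    (GammaIntegral_convergent hs) (ae_of_all _ fun u => by fun_prop)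
  filter_upwards [self_mem_nhdsWithin] with z (hz : 0 < z)
  refine ae_restrict_of_forall_mem measurableSet_Ioi fun u (hu : 0 < u) => ?_
  rw [norm_of_nonneg (by positivity)]
  gcongr
  exact sub_le_self _ (by positivity)

lemma hasDerivAt_extendedGamma (s : ℝ) {z : ℝ} (hz : 0 < z) :
    HasDerivAt (extendedGamma s) (-extendedGamma (s - 1) z) z := by
  rw [extendedGamma, ← integral_neg]
  refine (hasDerivAt_integral_of_dominated_loc_of_deriv_le
    (F' := fun z u => -(exp (-u - z / u) * u ^ (s - 1 - 1)))
    (bound := fun u => exp (-u - z / 2 / u) * u ^ (s - 1 - 1))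
    (Ioi_mem_nhds (half_lt_self hz))
    (.of_forall fun y => (measurable_extendedGamma_integrand s y).aestronglyMeasurable)
    (integrableOn_extendedGamma s hz)
    (measurable_extendedGamma_integrand (s - 1) z).neg.aestronglyMeasurable ?_
    (integrableOn_extendedGamma (s - 1) (half_pos hz)) ?_).2
  · refine ae_restrict_of_forall_mem measurableSet_Ioi fun u (hu : 0 < u) y (hy : z / 2 < y) => ?_
    rw [norm_neg, norm_of_nonneg (by positivity)]
    gcongr
  · refine ae_restrict_of_forall_mem measurableSet_Ioi fun u (hu : 0 < u) y _ => ?_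
    refine ((((hasDerivAt_id y).div_const u).const_sub (-u)).exp.mul_const
      (u ^ (s - 1))).congr_deriv ?_
    rw [rpow_sub_one hu.ne' (s - 1), id]
    field_simp

lemma continuous_extendedGamma_left {z : ℝ} (hz : 0 < z) :
    Continuous fun s => extendedGamma s z := by
  refine continuous_iff_continuousAt.2 fun s => continuousAt_of_dominated
    (.of_forall fun r => (measurable_extendedGamma_integrand r z).aestronglyMeasurable) ?_
    ((integrableOn_extendedGamma (s - 1) hz).add (integrableOn_extendedGamma (s + 1) hz)) ?_
  · filter_upwards [Icc_mem_nhds (sub_one_lt s) (lt_add_one s)] with r ⟨hr₁, hr₂⟩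
    refine ae_restrict_of_forall_mem measurableSet_Ioi fun u (hu : 0 < u) => ?_
    rw [norm_of_nonneg (by positivity), Pi.add_apply, ← mul_add]
    gcongr
    rcases le_total u 1 with hu1 | hu1
    · exact le_add_of_le_of_nonneg
        (rpow_le_rpow_of_exponent_ge hu hu1 (by linarith)) (by positivity)
    · exact le_add_of_nonneg_of_le (by positivity)
        (rpow_le_rpow_of_exponent_le hu1 (by linarith))
  · refine ae_restrict_of_forall_mem measurableSet_Ioi fun u (hu : 0 < u) => ?_
    exact continuousAt_const.mul (continuousAt_const.rpow (by fun_prop) (.inl hu.ne'))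

/-- The substitution `u ↦ z / u` in the integral, as `u ↦ z u` followed by `u ↦ u⁻¹`. -/
lemma extendedGamma_neg_left (s : ℝ) {z : ℝ} (hz : 0 < z) :
    extendedGamma (-s) z = z ^ (-s) * extendedGamma s z := by
  calc extendedGamma (-s) z
      = z * ∫ v in Ioi 0, exp (-(z * v) - z / (z * v)) * (z * v) ^ (-s - 1) := by
        rw [← smul_eq_mul, integral_comp_mul_left_Ioi'
          (fun u => exp (-u - z / u) * u ^ (-s - 1)) 0 hz, mul_zero, extendedGamma]
    _ = z ^ (-s) * ∫ v in Ioi 0, (|(-1 : ℝ)| * v ^ ((-1 : ℝ) - 1)) •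
          (exp (-v ^ (-1 : ℝ) - z / v ^ (-1 : ℝ)) * (v ^ (-1 : ℝ)) ^ (s - 1)) := by
        rw [← integral_const_mul, ← integral_const_mul]
        refine setIntegral_congr_fun measurableSet_Ioi fun v (hv : 0 < v) => ?_
        simp only [abs_neg, abs_one, one_mul, smul_eq_mul]
        rw [mul_rpow hz.le hv.le, rpow_sub_one hz.ne', ← rpow_mul hv.le, rpow_neg_one,
          mul_left_comm (v ^ (-1 - 1 : ℝ)), ← rpow_add hv]
        field_simp
        ring_nf
    _ = z ^ (-s) * extendedGamma s z := by
        rw [integral_comp_rpow_Ioi (fun u => exp (-u - z / u) * u ^ (s - 1)) (by norm_num),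
          extendedGamma]

/-- A solution on `(0, ∞)` of the first order system `f' = z ^ (s - 1) g`, `g' = z ^ (-s) f`, with
limits `a`, `b` at `0`: the form of the Bessel–Clifford equation `z f'' + (1 - s) f' = f` that is
symmetric under exchanging `s` with `1 - s` and `f` with `g`. -/
structure IsBesselCliffordSolution (s a b : ℝ) (f g : ℝ → ℝ) : Prop where
  hasDerivAt_fst : ∀ z, 0 < z → HasDerivAt f (z ^ (s - 1) * g z) z
  hasDerivAt_snd : ∀ z, 0 < z → HasDerivAt g (z ^ (-s) * f z) z
  tendsto_fst : Tendsto f (𝓝[>] 0) (𝓝 a)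
  tendsto_snd : Tendsto g (𝓝[>] 0) (𝓝 b)

lemma eq_of_hasDerivAt_zero_of_tendsto_nhdsGT {f : ℝ → ℝ} {x₀ c x : ℝ}
    (hderiv : ∀ y, x₀ < y → HasDerivAt f 0 y) (hlim : Tendsto f (𝓝[>] x₀) (𝓝 c)) (hx : x₀ < x) :
    f x = c := by
  refine tendsto_nhds_unique (tendsto_const_nhds.congr' ?_) hlim
  filter_upwards [self_mem_nhdsWithin] with y hy
  exact isOpen_Ioi.is_const_of_deriv_eq_zero isPreconnected_Ioi
    (fun w hw => (hderiv w hw).differentiableAt.differentiableWithinAt)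
    (fun w hw => (hderiv w hw).deriv) hx hy

namespace IsBesselCliffordSolution

variable {s a b a₁ b₁ a₂ b₂ a₃ b₃ z : ℝ} {f g f₁ g₁ f₂ g₂ f₃ g₃ : ℝ → ℝ}

lemma swap (h : IsBesselCliffordSolution s a b f g) :
    IsBesselCliffordSolution (1 - s) b a g f where
  hasDerivAt_fst z hz := (h.hasDerivAt_snd z hz).congr_deriv (by ring_nf)
  hasDerivAt_snd z hz := (h.hasDerivAt_fst z hz).congr_deriv (by ring_nf)
  tendsto_fst := h.tendsto_snd
  tendsto_snd := h.tendsto_fst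

lemma wronskian_eq (h₁ : IsBesselCliffordSolution s a₁ b₁ f₁ g₁)
    (h₂ : IsBesselCliffordSolution s a₂ b₂ f₂ g₂) (hz : 0 < z) :
    f₁ z * g₂ z - f₂ z * g₁ z = a₁ * b₂ - a₂ * b₁ := by
  refine eq_of_hasDerivAt_zero_of_tendsto_nhdsGT (f := fun z => f₁ z * g₂ z - f₂ z * g₁ z)
    (fun y hy => ?_) ((h₁.tendsto_fst.mul h₂.tendsto_snd).sub
      (h₂.tendsto_fst.mul h₁.tendsto_snd)) hz
  refine (((h₁.hasDerivAt_fst y hy).mul (h₂.hasDerivAt_snd y hy)).sub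
    ((h₂.hasDerivAt_fst y hy).mul (h₁.hasDerivAt_snd y hy))).congr_deriv ?_
  ring

/-- The solution space is two-dimensional: this is the Plücker relation between three Wronskians. -/
lemma fst_linear_dependence (h₁ : IsBesselCliffordSolution s a₁ b₁ f₁ g₁)
    (h₂ : IsBesselCliffordSolution s a₂ b₂ f₂ g₂) (h₃ : IsBesselCliffordSolution s a₃ b₃ f₃ g₃)
    (hz : 0 < z) :
    (a₁ * b₂ - a₂ * b₁) * f₃ z
      = (a₃ * b₂ - a₂ * b₃) * f₁ z + (a₁ * b₃ - a₃ * b₁) * f₂ z := by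
  rw [← h₁.wronskian_eq h₂ hz, ← h₃.wronskian_eq h₂ hz, ← h₁.wronskian_eq h₃ hz]
  ring

end IsBesselCliffordSolution

lemma isBesselCliffordSolution_besselClifford {s : ℝ} (hs : s < 1) :
    IsBesselCliffordSolution s (Gamma (1 - s))⁻¹ 0 (besselClifford (-s))
      (fun z => z ^ (1 - s) * besselClifford (1 - s) z) where
  hasDerivAt_fst z hz := (hasDerivAt_besselClifford (-s) z).congr_deriv <| by
    rw [← mul_assoc, ← rpow_add hz, sub_add_sub_cancel', sub_self, rpow_zero, one_mul,
      neg_add_eq_sub]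
  hasDerivAt_snd z hz := (hasDerivAt_rpow_mul_besselClifford (1 - s) hz).congr_deriv <| by
    rw [sub_sub_cancel_left]
  tendsto_fst := by simpa [neg_add_eq_sub] using tendsto_besselClifford_nhdsGT_zero (-s)
  tendsto_snd := by
    have hs' : 0 < 1 - s := sub_pos.2 hs
    have hpow : Tendsto (fun z : ℝ => z ^ (1 - s)) (𝓝[>] 0) (𝓝 0) := by
      simpa [zero_rpow hs'.ne'] using
        (continuousAt_rpow_const 0 (1 - s) (.inr hs'.le)).tendsto.mono_left nhdsWithin_le_nhds
    simpa using hpow.mul (tendsto_besselClifford_nhdsGT_zero (1 - s))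

lemma isBesselCliffordSolution_extendedGamma {s : ℝ} (hs₀ : 0 < s) (hs₁ : s < 1) :
    IsBesselCliffordSolution s (Gamma s) (-Gamma (1 - s)) (extendedGamma s)
      (fun z => -extendedGamma (1 - s) z) where
  hasDerivAt_fst z hz := (hasDerivAt_extendedGamma s hz).congr_deriv <| by
    rw [← neg_sub 1 s, extendedGamma_neg_left (1 - s) hz, mul_neg]
  hasDerivAt_snd z hz := (hasDerivAt_extendedGamma (1 - s) hz).neg.congr_deriv <| by
    rw [sub_sub_cancel_left, extendedGamma_neg_left s hz, neg_neg]
  tendsto_fst := tendsto_extendedGamma_nhdsGT_zero hs₀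
  tendsto_snd := (tendsto_extendedGamma_nhdsGT_zero (sub_pos.2 hs₁)).neg

/-- The connection formula `(π / 2) (I_{-s} - I_s) / sin (π s) = K_s`, cleared of denominators and
written in the variable `z = (x / 2) ^ 2`. -/
def ConnectionFormula (s : ℝ) : Prop :=
  ∀ z, 0 < z → extendedGamma s z * sin (π * s)
    = π * (besselClifford (-s) z - z ^ s * besselClifford s z)

namespace ConnectionFormula

variable {s : ℝ}

lemma of_mem_Ioo (hs : s ∈ Ioo 0 1) : ConnectionFormula s := fun z hz => by
  obtain ⟨hs₀, hs₁⟩ := hs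
  have hs₁' : 0 < 1 - s := sub_pos.2 hs₁
  have hE := isBesselCliffordSolution_besselClifford hs₁
  have hE' := (isBesselCliffordSolution_besselClifford (sub_lt_self 1 hs₀)).swap
  have hF := isBesselCliffordSolution_extendedGamma hs₀ hs₁
  simp only [sub_sub_cancel] at hE'
  have hGamma : Gamma s ≠ 0 := (Gamma_pos_of_pos hs₀).ne'
  have hGamma' : Gamma (1 - s) ≠ 0 := (Gamma_pos_of_pos hs₁').ne'
  have hdep : (Gamma (1 - s))⁻¹ * (Gamma s)⁻¹ * extendedGamma s z
      = besselClifford (-s) z - z ^ s * besselClifford s z := by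
    simpa [hGamma, hGamma', ← sub_eq_add_neg] using hE.fst_linear_dependence hE' hF hz
  have hsin : sin (π * s) ≠ 0 :=
    (sin_pos_of_pos_of_lt_pi (by positivity) (mul_lt_of_lt_one_right pi_pos hs₁)).ne'
  have hrefl : Gamma s * Gamma (1 - s) * sin (π * s) = π := by
    rw [Gamma_mul_Gamma_one_sub, div_mul_cancel₀ _ hsin]
  calc extendedGamma s z * sin (π * s)
      = Gamma s * Gamma (1 - s) * sin (π * s)
          * ((Gamma (1 - s))⁻¹ * (Gamma s)⁻¹ * extendedGamma s z) := by field_simp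
    _ = π * (besselClifford (-s) z - z ^ s * besselClifford s z) := by rw [hrefl, hdep]

lemma sub_one (h : ConnectionFormula s) : ConnectionFormula (s - 1) := fun z hz => by
  have hlhs := (hasDerivAt_extendedGamma s hz).mul_const (sin (π * s))
  have hrhs := ((hasDerivAt_besselClifford (-s) z).sub
    (hasDerivAt_rpow_mul_besselClifford s hz)).const_mul π
  have hderiv := hlhs.unique (hrhs.congr_of_eventuallyEq
    (eventually_of_mem (Ioi_mem_nhds hz) h))
  have hsin : sin (π * (s - 1)) = -sin (π * s) := by rw [mul_sub, mul_one, sin_sub_pi]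
  rw [hsin, neg_sub', sub_neg_eq_add, ← hderiv]
  ring

lemma neg (h : ConnectionFormula s) : ConnectionFormula (-s) := fun z hz => by
  have hzs : z ^ (-s) * z ^ s = 1 := by rw [← rpow_add hz, neg_add_cancel, rpow_zero]
  rw [extendedGamma_neg_left s hz, mul_neg, sin_neg, neg_neg]
  linear_combination (-z ^ (-s)) * h z hz + π * besselClifford s z * hzs

lemma add_one (h : ConnectionFormula s) : ConnectionFormula (s + 1) := by
  simpa [add_comm] using h.neg.sub_one.neg

end ConnectionFormula

lemma connectionFormula (s : ℝ) : ConnectionFormula s := by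
  rw [← Int.fract_add_floor s]
  induction ⌊s⌋ using Int.induction_on with
  | zero =>
    rcases (Int.fract_nonneg s).eq_or_lt with h0 | hpos
    · simp [ConnectionFormula, ← h0]
    · simpa using ConnectionFormula.of_mem_Ioo ⟨hpos, Int.fract_lt_one s⟩
  | succ n ih => simpa [add_assoc] using ih.add_one
  | pred n ih => simpa [add_sub_assoc] using ih.sub_one

lemma besselIt_eq_besselClifford (a x : ℝ) : besselIt a x = besselClifford a ((x / 2) ^ 2) := by
  simp only [besselIt, besselClifford, pow_mul]

lemma besselI_eq_rpow_mul_besselClifford (a : ℝ) {x : ℝ} (hx : 0 < x) :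
    besselI a x = (x / 2) ^ a * besselClifford a ((x / 2) ^ 2) := by
  rw [besselI, besselClifford, ← tsum_mul_left]
  refine tsum_congr fun m => ?_
  rw [add_comm, rpow_add (half_pos hx), rpow_mul (half_pos hx).le, rpow_two, rpow_natCast,
    mul_div_assoc]

lemma besselI_neg_sub_besselI_div_sin {x s : ℝ} (hx : 0 < x) (hs : sin (s * π) ≠ 0) :
    π / 2 * (besselI (-s) x - besselI s x) / sin (s * π)
      = (x / 2) ^ (-s) * extendedGamma s ((x / 2) ^ 2) / 2 := by
  have hx2 : 0 < x / 2 := half_pos hx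
  have hpow : (x / 2) ^ (-s) * ((x / 2) ^ 2) ^ s = (x / 2) ^ s := by
    rw [← rpow_two, ← rpow_mul hx2.le, ← rpow_add hx2]
    ring_nf
  have hconn := connectionFormula s _ (pow_pos hx2 2)
  rw [mul_comm π s] at hconn
  rw [besselI_eq_rpow_mul_besselClifford _ hx, besselI_eq_rpow_mul_besselClifford _ hx, ← hpow,
    div_eq_iff hs]
  linear_combination (-(x / 2) ^ (-s) / 2) * hconn

lemma eventually_sin_mul_pi_ne_zero (a : ℝ) : ∀ᶠ s in 𝓝[≠] a, sin (s * π) ≠ 0 := by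
  have hderiv : HasDerivAt (fun s => sin (s * π)) (cos (a * π) * π) a :=
    (hasDerivAt_mul_const π).sin
  by_cases hsin : sin (a * π) = 0
  · have hcos : cos (a * π) ≠ 0 := fun hcos => by
      simpa [hsin, hcos] using sin_sq_add_cos_sq (a * π)
    exact hderiv.eventually_ne (mul_ne_zero hcos pi_ne_zero)
  · exact (hderiv.continuousAt.eventually_ne hsin).filter_mono nhdsWithin_le_nhds

lemma besselK_eq_rpow_mul_extendedGamma (a : ℝ) {x : ℝ} (hx : 0 < x) :
    besselK a x = (x / 2) ^ (-a) * extendedGamma a ((x / 2) ^ 2) / 2 := by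
  have hx2 : 0 < x / 2 := half_pos hx
  have hcont : Continuous fun s => (x / 2) ^ (-s) * extendedGamma s ((x / 2) ^ 2) / 2 :=
    ((continuous_const.rpow continuous_neg fun _ => .inl hx2.ne').mul
      (continuous_extendedGamma_left (pow_pos hx2 2))).div_const 2
  refine Tendsto.limUnder_eq ((hcont.tendsto a).mono_left nhdsWithin_le_nhds |>.congr' ?_)
  filter_upwards [eventually_sin_mul_pi_ne_zero a] with s hs
  exact (besselI_neg_sub_besselI_div_sin hx hs).symm

lemma besselKt_eq_extendedGamma (a : ℝ) {x : ℝ} (hx : 0 < x) :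
    besselKt a x = extendedGamma (-a) ((x / 2) ^ 2) / 2 := by
  have hx2 : 0 < x / 2 := half_pos hx
  rw [besselKt, besselK_eq_rpow_mul_extendedGamma a hx, extendedGamma_neg_left a (pow_pos hx2 2),
    ← rpow_natCast_mul hx2.le, mul_div_assoc, ← mul_assoc, ← rpow_add hx2]
  ring_nf

lemma integral_rpow_mul_extendedGamma_integrand (s : ℝ) {c u : ℝ} (hc : 0 < c) (hu : 0 < u) :
    ∫ z in Ioi 0, z ^ (c - 1) * (exp (-u - z / u) * u ^ (s - 1))
      = Gamma c * (exp (-u) * u ^ (c + s - 1)) := by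
  calc ∫ z in Ioi 0, z ^ (c - 1) * (exp (-u - z / u) * u ^ (s - 1))
      = exp (-u) * u ^ (s - 1) * ∫ z in Ioi 0, z ^ (c - 1) * exp (-(u⁻¹ * z)) := by
        rw [← integral_const_mul]
        refine integral_congr_ae (.of_forall fun z => ?_)
        simp only [sub_eq_add_neg, exp_add, div_eq_inv_mul]
        ring
    _ = exp (-u) * u ^ (s - 1) * (u ^ c * Gamma c) := by
        rw [integral_rpow_mul_exp_neg_mul_Ioi hc (inv_pos.2 hu), one_div, inv_inv]
    _ = Gamma c * (exp (-u) * u ^ (c + s - 1)) := by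
        rw [add_sub_assoc, rpow_add hu]
        ring

lemma integrable_mellin_extendedGamma_integrand {c s : ℝ} (hc : 0 < c) (hcs : 0 < c + s) :
    Integrable (fun p : ℝ × ℝ => p.1 ^ (c - 1) * (exp (-p.2 - p.1 / p.2) * p.2 ^ (s - 1)))
      ((volume.restrict (Ioi 0)).prod (volume.restrict (Ioi 0))) := by
  rw [integrable_prod_iff' (Measurable.aestronglyMeasurable (by fun_prop))]
  constructor
  · refine ae_restrict_of_forall_mem measurableSet_Ioi fun u (hu : 0 < u) => ?_
    refine .of_integral_ne_zero ?_
    rw [integral_rpow_mul_extendedGamma_integrand s hc hu]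
    exact (mul_pos (Gamma_pos_of_pos hc) (by positivity)).ne'
  · refine (integrable_congr ?_).1 ((GammaIntegral_convergent hcs).const_mul (Gamma c))
    refine ae_restrict_of_forall_mem measurableSet_Ioi fun u (hu : 0 < u) => ?_
    dsimp only
    rw [← integral_rpow_mul_extendedGamma_integrand s hc hu]
    refine setIntegral_congr_fun measurableSet_Ioi fun z (hz : 0 < z) => ?_
    exact (norm_of_nonneg (by positivity)).symm

lemma integrableOn_rpow_mul_extendedGamma {c s : ℝ} (hc : 0 < c) (hcs : 0 < c + s) :
    IntegrableOn (fun z => z ^ (c - 1) * extendedGamma s z) (Ioi 0) := by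
  simpa only [IntegrableOn, extendedGamma, integral_const_mul] using
    (integrable_mellin_extendedGamma_integrand hc hcs).integral_prod_left

lemma integral_rpow_mul_extendedGamma {c s : ℝ} (hc : 0 < c) (hcs : 0 < c + s) :
    ∫ z in Ioi 0, z ^ (c - 1) * extendedGamma s z = Gamma c * Gamma (c + s) := by
  calc ∫ z in Ioi 0, z ^ (c - 1) * extendedGamma s z
      = ∫ z in Ioi 0, ∫ u in Ioi 0, z ^ (c - 1) * (exp (-u - z / u) * u ^ (s - 1)) := by
        simp only [extendedGamma, integral_const_mul]
    _ = ∫ u in Ioi 0, ∫ z in Ioi 0, z ^ (c - 1) * (exp (-u - z / u) * u ^ (s - 1)) :=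
        integral_integral_swap (integrable_mellin_extendedGamma_integrand hc hcs)
    _ = ∫ u in Ioi 0, Gamma c * (exp (-u) * u ^ (c + s - 1)) :=
        setIntegral_congr_fun measurableSet_Ioi fun u hu =>
          integral_rpow_mul_extendedGamma_integrand s hc hu
    _ = Gamma c * Gamma (c + s) := by
        rw [integral_const_mul, Gamma_eq_integral hcs]

lemma integral_besselClifford_mul_extendedGamma {c s r : ℝ} (hc : 0 < c) (hcs : 0 < c + s)
    (hr : |r| < 1) :
    ∫ z in Ioi 0, besselClifford (c + s - 1) (r * z) * extendedGamma s z * z ^ (c - 1)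
      = Gamma c * (1 - r) ^ (-c) := by
  set term : ℝ → ℕ → ℝ → ℝ := fun q m z =>
    q ^ m / (m ! * Gamma (c + m + s)) * (z ^ (c + m - 1) * extendedGamma s z) with hterm
  have hcm (m : ℕ) : 0 < c + m := by positivity
  have hcms (m : ℕ) : 0 < c + m + s := by linarith [m.cast_nonneg (α := ℝ)]
  have hc_ne (n : ℕ) : c ≠ -n := by linarith [hcm n]
  have hintegral (q : ℝ) (m : ℕ) : ∫ z in Ioi 0, term q m z = Gamma (c + m) / m ! * q ^ m := by
    have hGamma := (Gamma_pos_of_pos (hcms m)).ne'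
    rw [hterm, integral_const_mul, integral_rpow_mul_extendedGamma (hcm m) (hcms m)]
    field_simp
  have hnorm (m : ℕ) : ∫ z in Ioi 0, ‖term r m z‖ = Gamma (c + m) / m ! * |r| ^ m := by
    rw [← hintegral]
    refine setIntegral_congr_fun measurableSet_Ioi fun z (hz : 0 < z) => ?_
    have hGamma := Gamma_pos_of_pos (hcms m)
    have hF := extendedGamma_nonneg s z
    simp only [hterm, norm_mul, norm_div, norm_pow, norm_eq_abs, abs_of_pos hGamma,
      abs_of_nonneg hF, abs_of_nonneg (rpow_nonneg hz.le _), Nat.abs_cast]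
  have hseries : HasSum (fun m => ∫ z in Ioi 0, term r m z) (∫ z in Ioi 0, ∑' m, term r m z) := by
    refine hasSum_integral_of_summable_integral_norm
      (fun m => (integrableOn_rpow_mul_extendedGamma (hcm m) (hcms m)).const_mul _) ?_
    simp only [hnorm]
    exact (hasSum_Gamma_add_nat_div_factorial_mul_pow hc_ne (by rwa [abs_abs])).summable
  have hexpand : ∀ z ∈ Ioi (0 : ℝ), besselClifford (c + s - 1) (r * z) * extendedGamma s z
      * z ^ (c - 1) = ∑' m, term r m z := fun z hz => by
    rw [besselClifford, ← tsum_mul_right, ← tsum_mul_right]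
    refine tsum_congr fun m => ?_
    rw [show (m : ℝ) + (c + s - 1) + 1 = c + m + s by ring, mul_pow]
    simp only [hterm]
    rw [add_sub_right_comm c, rpow_add_natCast (ne_of_gt hz)]
    ring
  rw [setIntegral_congr_fun measurableSet_Ioi hexpand]
  simp only [hintegral] at hseries
  exact hseries.unique (hasSum_Gamma_add_nat_div_factorial_mul_pow hc_ne hr)

lemma integral_comp_div_sq_mul_rpow (g : ℝ → ℝ) (c : ℝ) {k : ℝ} (hk : 0 < k) :
    ∫ x in Ioi 0, g ((x / k) ^ 2) * x ^ (2 * c - 1)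
      = k ^ (2 * c) / 2 * ∫ z in Ioi 0, g z * z ^ (c - 1) := by
  have hscale := integral_comp_mul_left_Ioi' (fun x => g ((x / k) ^ 2) * x ^ (2 * c - 1)) 0 hk
  rw [mul_zero, smul_eq_mul] at hscale
  rw [← hscale, ← integral_comp_rpow_Ioi_of_pos (g := fun z => g z * z ^ (c - 1)) two_pos,
    ← integral_const_mul, ← integral_const_mul]
  refine setIntegral_congr_fun measurableSet_Ioi fun y (hy : 0 < y) => ?_
  have hy2 : y ^ (2 * c - 1) = y * (y ^ 2) ^ (c - 1) := by
    rw [← rpow_natCast_mul hy.le, mul_comm y, ← rpow_add_one hy.ne']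
    push_cast
    ring_nf
  simp only [smul_eq_mul]
  rw [mul_div_cancel_left₀ _ hk.ne', mul_rpow hk.le hy.le, rpow_sub_one hk.ne', rpow_two, hy2,
    show (2 : ℝ) - 1 = 1 by norm_num, rpow_one]
  field_simp

lemma genFun_eq_besselClifford_mul_extendedGamma {μ ν t x : ℝ} (ht : t < 1) (hx : 0 < x) :
    genFun μ ν t x = (1 - t) ^ (-(μ + ν + 2) / 2) / 2 *
      (besselClifford (μ / 2) (t ^ 2 * (x / (2 * (1 - t))) ^ 2)
        * extendedGamma (-(ν / 2)) ((x / (2 * (1 - t))) ^ 2)) := by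
  have ht' : 0 < 1 - t := sub_pos.2 ht
  have harg : x / (1 - t) / 2 = x / (2 * (1 - t)) := by rw [div_div, mul_comm]
  rw [genFun, besselIt_eq_besselClifford, besselKt_eq_extendedGamma _ (div_pos hx ht'),
    mul_div_assoc t, mul_div_assoc t, harg, mul_pow]
  ring

theorem genFun_integral_general {μ ν t : ℝ} (hμ : -2 < μ) (hμν : -2 < μ + ν)
    (ht : t ∈ Ioo (-1) 1) :
    ∫ x in Ioi 0, genFun μ ν t x * x ^ (μ + ν + 1)
      = 2 ^ (μ + ν) * Gamma ((μ + ν + 2) / 2) * (1 + t) ^ (-(μ + ν + 2) / 2) := by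
  obtain ⟨ht₀, ht₁⟩ := ht
  obtain ⟨hadd, hsub⟩ : 0 < 1 + t ∧ 0 < 1 - t := ⟨by linarith, by linarith⟩
  have ht2 : |t ^ 2| < 1 := by
    rw [abs_pow]
    exact pow_lt_one₀ (abs_nonneg t) (abs_lt.2 ⟨ht₀, ht₁⟩) two_ne_zero
  set c := (μ + ν + 2) / 2 with hc
  have hμ_eq : μ / 2 = c + -(ν / 2) - 1 := by rw [hc]; ring
  have hexp : μ + ν + 1 = 2 * c - 1 := by rw [hc]; ring
  have hneg : -(μ + ν + 2) / 2 = -c := by rw [hc]; ring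
  set g : ℝ → ℝ := fun z =>
    besselClifford (c + -(ν / 2) - 1) (t ^ 2 * z) * extendedGamma (-(ν / 2)) z with hg
  calc ∫ x in Ioi 0, genFun μ ν t x * x ^ (μ + ν + 1)
      = ∫ x in Ioi 0, (1 - t) ^ (-c) / 2 * (g ((x / (2 * (1 - t))) ^ 2) * x ^ (2 * c - 1)) :=
        setIntegral_congr_fun measurableSet_Ioi fun x hx => by
          simp only [genFun_eq_besselClifford_mul_extendedGamma ht₁ hx, hg, hexp, hneg, hμ_eq]
          ring
    _ = (1 - t) ^ (-c) / 2
          * ((2 * (1 - t)) ^ (2 * c) / 2 * (Gamma c * (1 - t ^ 2) ^ (-c))) := by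
        rw [integral_const_mul, integral_comp_div_sq_mul_rpow g c (by positivity),
          integral_besselClifford_mul_extendedGamma (by linarith) (by linarith) ht2]
    _ = 2 ^ (μ + ν) * Gamma c * (1 + t) ^ (-(μ + ν + 2) / 2) := by
        rw [show 1 - t ^ 2 = (1 - t) * (1 + t) by ring, mul_rpow two_pos.le hsub.le,
          mul_rpow hsub.le hadd.le, hneg, show μ + ν = 2 * c - 2 by rw [hc]; ring,
          rpow_sub two_pos, two_mul c, rpow_add hsub, rpow_neg hsub.le]
        field_simp
        ring

end

/-- The integral of the generating function:
`∫₀^∞ G^{μ,ν}(t,x) x^{μ+ν+1} dx = 2^{μ+ν} Γ((μ+ν+2)/2) (1+t)^{−(μ+ν+2)/2}` for `−1 < t < 1`. -/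
theorem genFun_integral (μ ν : ℤ) (hcond : IntCond μ ν) (t : ℝ) (ht : t ∈ Set.Ioo (-1 : ℝ) 1) :
    ∫ x in Set.Ioi (0 : ℝ), genFun μ ν t x * x ^ ((μ : ℝ) + ν + 1)
      = (2 : ℝ) ^ ((μ : ℝ) + ν) * Real.Gamma (((μ : ℝ) + ν + 2) / 2)
          * (1 + t) ^ (-((μ : ℝ) + ν + 2) / 2) := by
  obtain ⟨hν, hνμ, -, hne⟩ := hcond
  exact genFun_integral_general (by norm_cast; lia) (by norm_cast; lia) ht
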